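/- arXiv:2308.11953 — 3 statements merged into one kernel-verified Lean document; each statement's English description precedes it below -/
import Mathlib

section
/- Let E_c and E_s be real Hilbert spaces and let E = E_c × E_s carry the product inner product. Let S ≥ μ > 0, R ≥ 0, H ≥ 0, and integers N, T, K, M ≥ 1. Set γ = max(8S/μ − 1, K·M) and η_i = 2/(μ(γ + i)) for i ∈ ℕ. Let F : E → ℝ be S-smooth with gradient G, and let w* = (w_c*, w_s*) ∈ E satisfy G(w*) = 0. Let (Ω, P) be a probability space and, for i = 0, 1, …, TKM, let W_c^i : Ω → E_c and W_s^i : Ω → E_s be random vectors such that ‖W_c^i − w_c*‖² and ‖W_s^i − w_s*‖² are integrable and F∘(W_c^{TKM}, W_s^{TKM}) is integrable. Define Δ_s(i) = 𝔼‖W_s^i − w_s*‖² and Δ_c(i) = 𝔼‖W_c^i − w_c*‖², and assume that for all 0 ≤ i < TKM the recursions Δ_s(i+1) ≤ (1 − μη_i)Δ_s(i) + 2η_i²R²/N² and Δ_c(i+1) ≤ (1 − μη_i)Δ_c(i) + η_i²H hold. Then 𝔼[F(W_c^{TKM}, W_s^{TKM})] − F(w*) ≤ (S/2)(L_s + L_c),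 where L_s = (8R² + μ²N²(γ+1)Δ_s(0))/(μ²N²(γ + TKM)) and L_c = (4H + μ²(γ+1)Δ_c(0))/(μ²(γ + TKM)). -/
open MeasureTheory RealInnerProductSpace

lemma rec_bound (γ μ B : ℝ) (hμ : 0 < μ) (hB : 0 ≤ B) (hγ : 2 ≤ γ) (D : ℕ → ℝ) (n : ℕ)
    (h0 : 0 ≤ D 0)
    (hrec : ∀ i < n, D (i + 1) ≤ (1 - μ * (2 / (μ * (γ + i)))) * D i
      + (2 / (μ * (γ + i))) ^ 2 * B) :
    ∀ i ≤ n, D i ≤ (4 * B / μ ^ 2 + (γ + 1) * D 0) / (γ + i) := by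
  have hb : 0 ≤ 4 * B / μ ^ 2 := by positivity
  set b := 4 * B / μ ^ 2 with hbdef
  intro i
  induction i with
  | zero =>
    intro _
    rw [Nat.cast_zero, add_zero, le_div_iff₀ (by linarith)]
    nlinarith
  | succ k ih =>
    intro hk
    have h1 := ih (by omega)
    have h2 := hrec k (by omega)
    have hx : 2 ≤ γ + (k : ℝ) := by
      have : (0 : ℝ) ≤ k := Nat.cast_nonneg k
      linarith
    have hpush : γ + ((k + 1 : ℕ) : ℝ) = (γ + k) + 1 := by push_cast; ring
    rw [hpush]
    set x := γ + (k : ℝ) with hxd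
    have hx0 : 0 < x := by linarith
    have hbv : b ≤ b + (γ + 1) * D 0 := by nlinarith
    set v := b + (γ + 1) * D 0 with hv
    have e1 : μ * (2 / (μ * x)) = 2 / x := by field_simp
    have e2 : (2 / (μ * x)) ^ 2 * B = b / x ^ 2 := by rw [hbdef]; field_simp; ring
    rw [e1, e2] at h2
    have h3 : 0 ≤ 1 - 2 / x := by
      rw [sub_nonneg, div_le_one hx0]; exact hx
    have h4 : (1 - 2 / x) * D k ≤ (1 - 2 / x) * (v / x) := mul_le_mul_of_nonneg_left h1 h3
    have h5 : b / x ^ 2 ≤ v / x ^ 2 := by gcongr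
    have h6 : (1 - 2 / x) * (v / x) + v / x ^ 2 ≤ v / (x + 1) := by
      have : v / (x + 1) - ((1 - 2 / x) * (v / x) + v / x ^ 2) = v / (x ^ 2 * (x + 1)) := by
        field_simp; ring
      have h7 : 0 ≤ v / (x ^ 2 * (x + 1)) := div_nonneg (by linarith) (by positivity)
      linarith
    linarith

/-- Theorem 1 of the paper: convergence bound for MiniBatch-SFL, obtained by combining
the decomposition lemma with the server-side and client-side recursions. -/
theorem stmt_0 {Ec Es : Type*}
    [NormedAddCommGroup Ec] [InnerProductSpace ℝ Ec] [CompleteSpace Ec]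
    [NormedAddCommGroup Es] [InnerProductSpace ℝ Es] [CompleteSpace Es]
    (S μ R H : ℝ) (hμ : 0 < μ) (hSμ : μ ≤ S) (hR : 0 ≤ R) (hH : 0 ≤ H)
    (N T K M : ℕ) (hN : 1 ≤ N) (hT : 1 ≤ T) (hK : 1 ≤ K) (hM : 1 ≤ M)
    (γ : ℝ) (hγ : γ = max (8 * S / μ - 1) ((K * M : ℕ) : ℝ))
    (η : ℕ → ℝ) (hη : ∀ i : ℕ, η i = 2 / (μ * (γ + i)))
    (F : WithLp 2 (Ec × Es) → ℝ) (G : WithLp 2 (Ec × Es) → WithLp 2 (Ec × Es))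
    (hsmooth : ∀ x y : WithLp 2 (Ec × Es),
      F y ≤ F x + ⟪G x, y - x⟫ + S / 2 * ‖y - x‖ ^ 2)
    (wstarc : Ec) (wstars : Es)
    (wstar : WithLp 2 (Ec × Es))
    (hwstar : wstar = (WithLp.equiv 2 (Ec × Es)).symm (wstarc, wstars))
    (hstat : G wstar = 0)
    {Ω : Type*} [MeasurableSpace Ω] (P : Measure Ω) [IsProbabilityMeasure P]
    (Wc : ℕ → Ω → Ec) (Ws : ℕ → Ω → Es)
    (hintc : ∀ i ≤ T * K * M, Integrable (fun ω => ‖Wc i ω - wstarc‖ ^ 2) P)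
    (hints : ∀ i ≤ T * K * M, Integrable (fun ω => ‖Ws i ω - wstars‖ ^ 2) P)
    (hintF : Integrable (fun ω =>
      F ((WithLp.equiv 2 (Ec × Es)).symm (Wc (T * K * M) ω, Ws (T * K * M) ω))) P)
    (Δs Δc : ℕ → ℝ)
    (hΔs : ∀ i, Δs i = ∫ ω, ‖Ws i ω - wstars‖ ^ 2 ∂P)
    (hΔc : ∀ i, Δc i = ∫ ω, ‖Wc i ω - wstarc‖ ^ 2 ∂P)
    (hrecs : ∀ i < T * K * M,
      Δs (i + 1) ≤ (1 - μ * η i) * Δs i + 2 * (η i) ^ 2 * R ^ 2 / (N : ℝ) ^ 2)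
    (hrecc : ∀ i < T * K * M,
      Δc (i + 1) ≤ (1 - μ * η i) * Δc i + (η i) ^ 2 * H) :
    (∫ ω, F ((WithLp.equiv 2 (Ec × Es)).symm
        (Wc (T * K * M) ω, Ws (T * K * M) ω)) ∂P) - F wstar ≤
      S / 2 *
        ((8 * R ^ 2 + μ ^ 2 * (N : ℝ) ^ 2 * (γ + 1) * Δs 0) /
            (μ ^ 2 * (N : ℝ) ^ 2 * (γ + ((T * K * M : ℕ) : ℝ))) +
          (4 * H + μ ^ 2 * (γ + 1) * Δc 0) /
            (μ ^ 2 * (γ + ((T * K * M : ℕ) : ℝ)))) := by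
  have hγ2 : 2 ≤ γ := by
    have h1 : 8 * S / μ - 1 ≤ γ := hγ ▸ le_max_left _ _
    have h2 : 8 ≤ 8 * S / μ := by rw [le_div_iff₀ hμ]; linarith
    linarith
  have hN0 : (0 : ℝ) < N := by exact_mod_cast hN
  have hs0 : 0 ≤ Δs 0 := by rw [hΔs]; exact integral_nonneg fun ω => by positivity
  have hc0 : 0 ≤ Δc 0 := by rw [hΔc]; exact integral_nonneg fun ω => by positivity
  have bs := rec_bound γ μ (2 * R ^ 2 / (N : ℝ) ^ 2) hμ (by positivity) hγ2 Δs (T * K * M) hs0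
    (fun i hi => by
      have := hrecs i hi
      rw [hη] at this
      refine this.trans (le_of_eq ?_)
      ring) _ le_rfl
  have bc := rec_bound γ μ H hμ hH hγ2 Δc (T * K * M) hc0
    (fun i hi => by
      have := hrecc i hi
      rwa [hη] at this) _ le_rfl
  generalize T * K * M = n at *
  have hx0 : 0 < γ + (n : ℝ) := by
    have : (0 : ℝ) ≤ n := Nat.cast_nonneg n
    linarith
  have es : (8 * R ^ 2 + μ ^ 2 * (N : ℝ) ^ 2 * (γ + 1) * Δs 0) /
      (μ ^ 2 * (N : ℝ) ^ 2 * (γ + (n : ℝ))) =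
      (4 * (2 * R ^ 2 / (N : ℝ) ^ 2) / μ ^ 2 + (γ + 1) * Δs 0) / (γ + n) := by
    field_simp; ring
  have ec : (4 * H + μ ^ 2 * (γ + 1) * Δc 0) / (μ ^ 2 * (γ + (n : ℝ))) =
      (4 * H / μ ^ 2 + (γ + 1) * Δc 0) / (γ + n) := by
    field_simp
  rw [es, ec]
  have hpt : ∀ ω, F ((WithLp.equiv 2 (Ec × Es)).symm (Wc n ω, Ws n ω)) ≤
      F wstar + S / 2 * (‖Ws n ω - wstars‖ ^ 2 + ‖Wc n ω - wstarc‖ ^ 2) := by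
    intro ω
    have h := hsmooth wstar ((WithLp.equiv 2 (Ec × Es)).symm (Wc n ω, Ws n ω))
    rw [hstat, inner_zero_left, WithLp.prod_norm_sq_eq_of_L2] at h
    have e1 : ((WithLp.equiv 2 (Ec × Es)).symm (Wc n ω, Ws n ω) - wstar).fst
      = Wc n ω - wstarc := by rw [hwstar]; rfl
    have e2 : ((WithLp.equiv 2 (Ec × Es)).symm (Wc n ω, Ws n ω) - wstar).snd
      = Ws n ω - wstars := by rw [hwstar]; rfl
    rw [e1, e2] at h
    linarith
  have hi2 : Integrable (fun ω => S / 2 *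
      (‖Ws n ω - wstars‖ ^ 2 + ‖Wc n ω - wstarc‖ ^ 2)) P :=
    ((hints n le_rfl).add (hintc n le_rfl)).const_mul (S / 2)
  have hle := integral_mono hintF ((integrable_const (F wstar)).add hi2) hpt
  have heq : ∫ ω, (F wstar + S / 2 * (‖Ws n ω - wstars‖ ^ 2 + ‖Wc n ω - wstarc‖ ^ 2)) ∂P
      = F wstar + S / 2 * (Δs n + Δc n) := by
    rw [integral_add (integrable_const _) hi2, integral_const_mul,
      integral_add (hints n le_rfl) (hintc n le_rfl), hΔs, hΔc]
    simp
  have hle2 : _ ≤ F wstar + S / 2 * (Δs n + Δc n) := hle.trans (le_of_eq heq)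
  have hfin : S / 2 * (Δs n + Δc n) ≤ S / 2 * _ :=
    mul_le_mul_of_nonneg_left (add_le_add bs bc) (by linarith)
  linarith
end

section
/- Let γ ≥ 2 and C ≥ 0 be real numbers, and let Δ : ℕ → ℝ be a nonnegative sequence satisfying Δ(i+1) ≤ (1 − 2/(γ + i))·Δ(i) + C/(γ + i)² for all i ∈ ℕ. Then for all i ∈ ℕ, Δ(i) ≤ max(C, (γ+1)·Δ(0)) / (γ + i). -/
/-- The inductive recurrence lemma behind Propositions 1 and 2. -/
theorem stmt_4 (γ C : ℝ) (hγ : 2 ≤ γ) (hC : 0 ≤ C)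
    (Δ : ℕ → ℝ) (hnn : ∀ i, 0 ≤ Δ i)
    (hrec : ∀ i : ℕ, Δ (i + 1) ≤ (1 - 2 / (γ + i)) * Δ i + C / (γ + i) ^ 2) :
    ∀ i : ℕ, Δ i ≤ max C ((γ + 1) * Δ 0) / (γ + i) := by
  have hv1 : C ≤ max C ((γ + 1) * Δ 0) := le_max_left _ _
  have hv2 : (γ + 1) * Δ 0 ≤ max C ((γ + 1) * Δ 0) := le_max_right _ _
  generalize max C ((γ + 1) * Δ 0) = v at hv1 hv2
  intro i
  induction i with
  | zero =>
    have h0 := hnn 0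
    rw [le_div_iff₀ (by push_cast; linarith)]
    push_cast
    linarith
  | succ k ih =>
    have hr := hrec k
    have hk : (0 : ℝ) ≤ k := Nat.cast_nonneg k
    have hv : 0 ≤ v := hC.trans hv1
    push_cast
    rw [← add_assoc]
    have ht : 2 ≤ γ + (k : ℝ) := by linarith
    generalize γ + (k : ℝ) = t at *
    have ht0 : 0 < t := by linarith
    have h1 : 0 ≤ 1 - 2 / t := by
      rw [sub_nonneg, div_le_one ht0]; exact ht
    calc Δ (k + 1) ≤ (1 - 2 / t) * Δ k + C / t ^ 2 := hr
      _ ≤ (1 - 2 / t) * (v / t) + v / t ^ 2 := by gcongr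
      _ = v * (t - 1) / t ^ 2 := by field_simp; ring
      _ ≤ v / (t + 1) := by
        rw [div_le_div_iff₀ (by positivity) (by positivity)]
        nlinarith
end

section
/- Let E be a real inner product space, N ≥ 1 an integer, and p_1, …, p_N ≥ 0 weights with Σ_n p_n = 1. Let 0 < μ ≤ S, and for each n let f_n : E → ℝ be S-smooth and μ-strongly convex with gradient g_n, and suppose f_n is bounded below with infimum f_n*. Let F = Σ_n p_n f_n, let w* ∈ E be a global minimizer of F, and set Γ = F(w*) − Σ_n p_n f_n*. Let w_1, …, w_N ∈ E, let w̄ = Σ_n p_n w_n and ḡ = Σ_n p_n g_n(w_n), and let 0 < η ≤ 1/(4S). Then ‖w̄ − η ḡ − w*‖² ≤ (1 − μη)‖w̄ − w*‖² + 2 Σ_n p_n ‖w̄ − w_n‖² + 6Sη²Γ. -/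
open RealInnerProductSpace

theorem aux_jensen {E : Type*} [NormedAddCommGroup E] [InnerProductSpace ℝ E]
    (N : ℕ) (p : Fin N → ℝ) (hp : ∀ n, 0 ≤ p n) (hpsum : ∑ n, p n = 1) (x : Fin N → E) :
    ‖∑ n, p n • x n‖ ^ 2 ≤ ∑ n, p n * ‖x n‖ ^ 2 := by
  set m := ∑ n, p n • x n with hm
  have h1 : ∑ n, p n * (2 * ⟪x n, m⟫ - ‖m‖ ^ 2) ≤ ∑ n, p n * ‖x n‖ ^ 2 := by
    refine Finset.sum_le_sum fun n _ => mul_le_mul_of_nonneg_left ?_ (hp n)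
    have := norm_sub_sq_real (x n) m
    nlinarith [sq_nonneg ‖x n - m‖]
  have h2 : ∑ n, p n * (2 * ⟪x n, m⟫ - ‖m‖ ^ 2) = 2 * ⟪∑ n, p n • x n, m⟫ - ‖m‖ ^ 2 := by
    rw [sum_inner, Finset.mul_sum]
    simp only [real_inner_smul_left, mul_sub, Finset.sum_sub_distrib, ← Finset.sum_mul, hpsum,
      one_mul]
    congr 1
    exact Finset.sum_congr rfl fun n _ => by ring
  rw [← hm, real_inner_self_eq_norm_sq] at h2
  linarith

theorem aux_grad {E : Type*} [NormedAddCommGroup E] [InnerProductSpace ℝ E]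
    (S : ℝ) (hS : 0 < S) (f : E → ℝ) (g : E → E)
    (hsmooth : ∀ x y : E, f y ≤ f x + ⟪g x, y - x⟫ + S / 2 * ‖y - x‖ ^ 2)
    (s : ℝ) (hs : ∀ x, s ≤ f x) (x : E) : ‖g x‖ ^ 2 ≤ 2 * S * (f x - s) := by
  have h := hsmooth x (x - S⁻¹ • g x)
  have h' := hs (x - S⁻¹ • g x)
  have e : x - S⁻¹ • g x - x = -(S⁻¹ • g x) := by abel
  rw [e, inner_neg_right, real_inner_smul_right, real_inner_self_eq_norm_sq, norm_neg, norm_smul,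
    mul_pow, Real.norm_eq_abs, sq_abs] at h
  have e2 : S / 2 * (S⁻¹ ^ 2 * ‖g x‖ ^ 2) = S⁻¹ * ‖g x‖ ^ 2 / 2 := by field_simp
  have h3 : S⁻¹ * ‖g x‖ ^ 2 ≤ 2 * (f x - s) := by linarith
  have h4 := mul_le_mul_of_nonneg_left h3 hS.le
  rw [mul_inv_cancel_left₀ hS.ne'] at h4
  linarith

theorem aux_young {E : Type*} [NormedAddCommGroup E] [InnerProductSpace ℝ E]
    (η : ℝ) (x y : E) : -(2 * η * ⟪x, y⟫) ≤ ‖x‖ ^ 2 + η ^ 2 * ‖y‖ ^ 2 := by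
  have h := norm_add_sq_real x (η • y)
  rw [real_inner_smul_right, norm_smul, mul_pow, Real.norm_eq_abs, sq_abs] at h
  nlinarith [sq_nonneg ‖x + η • y‖]

/-- Deterministic core of the paper's supplementary Lemma 1: bound of one
federated-averaging SGD step for the client-side update. -/
theorem stmt_5 {E : Type*} [NormedAddCommGroup E] [InnerProductSpace ℝ E]
    (N : ℕ) (hN : 1 ≤ N)
    (p : Fin N → ℝ) (hp : ∀ n, 0 ≤ p n) (hpsum : ∑ n, p n = 1)
    (S μ : ℝ) (hμ : 0 < μ) (hμS : μ ≤ S)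
    (f : Fin N → E → ℝ) (g : Fin N → E → E)
    (hsmooth : ∀ n, ∀ x y : E, f n y ≤ f n x + ⟪g n x, y - x⟫ + S / 2 * ‖y - x‖ ^ 2)
    (hsc : ∀ n, ∀ x y : E, f n y ≥ f n x + ⟪g n x, y - x⟫ + μ / 2 * ‖y - x‖ ^ 2)
    (fstar : Fin N → ℝ) (hinf : ∀ n, IsGLB (Set.range (f n)) (fstar n))
    (F : E → ℝ) (hF : ∀ w, F w = ∑ n, p n * f n w)
    (wstar : E) (hmin : ∀ w, F wstar ≤ F w)
    (Γ : ℝ) (hΓ : Γ = F wstar - ∑ n, p n * fstar n)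
    (w : Fin N → E)
    (wbar : E) (hwbar : wbar = ∑ n, p n • w n)
    (gbar : E) (hgbar : gbar = ∑ n, p n • g n (w n))
    (η : ℝ) (hη0 : 0 < η) (hη : η ≤ 1 / (4 * S)) :
    ‖wbar - η • gbar - wstar‖ ^ 2 ≤
      (1 - μ * η) * ‖wbar - wstar‖ ^ 2 + 2 * ∑ n, p n * ‖wbar - w n‖ ^ 2 +
        6 * S * η ^ 2 * Γ := by
  have hS : 0 < S := lt_of_lt_of_le hμ hμS
  have hηS : 4 * S * η ≤ 1 := by
    rw [le_div_iff₀ (by positivity)] at hη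
    linarith
  have hs : ∀ n x, fstar n ≤ f n x := fun n x => (hinf n).1 ⟨x, rfl⟩
  have hgr := fun n x => aux_grad S hS (f n) (g n) (hsmooth n) (fstar n) (hs n) x
  have hone : ∀ n, -(2 * η * ⟪wbar - wstar, g n (w n)⟫) + η ^ 2 * ‖g n (w n)‖ ^ 2 ≤
      ‖wbar - w n‖ ^ 2 + 4 * S * η ^ 2 * (f n (w n) - fstar n)
        - 2 * η * (f n (w n) - f n wstar) - η * μ * ‖w n - wstar‖ ^ 2 := by
    intro n
    have h1 := aux_young η (wbar - w n) (g n (w n))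
    have h2 := hsc n (w n) wstar
    have h3 := mul_le_mul_of_nonneg_left (hgr n (w n)) (sq_nonneg η)
    have e1 : ⟪wbar - wstar, g n (w n)⟫ = ⟪wbar - w n, g n (w n)⟫ - ⟪g n (w n), wstar - w n⟫ := by
      rw [real_inner_comm (wstar - w n), ← inner_sub_left]
      congr 1
      abel
    rw [norm_sub_rev wstar] at h2
    rw [e1]
    have h4 := mul_le_mul_of_nonneg_left h2 (by positivity : (0:ℝ) ≤ 2 * η)
    linarith
  have htwo : ∀ n, 2 * η * f n wbar - 2 * η ^ 2 * S * (f n wbar - fstar n) - ‖wbar - w n‖ ^ 2 ≤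
      2 * η * f n (w n) := by
    intro n
    have h1 := aux_young η (w n - wbar) (g n wbar)
    have h2 := hsc n wbar (w n)
    have h3 := mul_le_mul_of_nonneg_left (hgr n wbar) (sq_nonneg η)
    have h5 : 0 ≤ μ / 2 * ‖w n - wbar‖ ^ 2 := by positivity
    rw [real_inner_comm, norm_sub_rev] at h1
    have h4 := mul_le_mul_of_nonneg_left
      (by linarith : f n wbar + ⟪g n wbar, w n - wbar⟫ ≤ f n (w n)) (by positivity : (0:ℝ) ≤ 2 * η)
    linarith
  have hJ1 := aux_jensen N p hp hpsum (fun n => g n (w n))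
  have hJ2 := aux_jensen N p hp hpsum (fun n => w n - wstar)
  have e2 : ∑ n, p n • (w n - wstar) = wbar - wstar := by
    simp only [smul_sub, Finset.sum_sub_distrib, ← Finset.sum_smul, hpsum, one_smul, hwbar]
  rw [e2] at hJ2
  rw [← hgbar] at hJ1
  have hΓ0 : 0 ≤ Γ := by
    rw [hΓ, hF, sub_nonneg]
    exact Finset.sum_le_sum fun n _ => mul_le_mul_of_nonneg_left (hs n _) (hp n)
  have hB := hmin wbar
  have hin : ⟪wbar - wstar, gbar⟫ = ∑ n, p n * ⟪wbar - wstar, g n (w n)⟫ := by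
    rw [hgbar, inner_sum]
    simp only [real_inner_smul_right]
  have hsum1 := Finset.sum_le_sum
    (fun n (_ : n ∈ Finset.univ) => mul_le_mul_of_nonneg_left (hone n) (hp n))
  have hsum2 := Finset.sum_le_sum
    (fun n (_ : n ∈ Finset.univ) => mul_le_mul_of_nonneg_left (htwo n) (hp n))
  have hFs := hF wstar
  have hFb := hF wbar
  set V := ∑ n, p n * ‖wbar - w n‖ ^ 2 with hV
  set D := ∑ n, p n * ‖w n - wstar‖ ^ 2 with hD
  set G := ∑ n, p n * ‖g n (w n)‖ ^ 2 with hG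
  set A := ∑ n, p n * f n (w n) with hA
  set T := ∑ n, p n * fstar n with hT
  set I := ∑ n, p n * ⟪wbar - wstar, g n (w n)⟫ with hI
  have hS1 : -(2 * η * I) + η ^ 2 * G ≤
      V + 4 * S * η ^ 2 * (A - T) - 2 * η * (A - F wstar) - η * μ * D := by
    rw [hFs, hV, hD, hG, hA, hT, hI]
    refine le_of_eq_of_le ?_ (hsum1.trans_eq ?_) <;>
    · simp only [Finset.mul_sum, ← Finset.sum_sub_distrib, ← Finset.sum_add_distrib,
        ← Finset.sum_neg_distrib]
      exact Finset.sum_congr rfl fun n _ => by ring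
  have hS2 : 2 * η * F wbar - 2 * η ^ 2 * S * (F wbar - T) - V ≤ 2 * η * A := by
    rw [hFb, hV, hA, hT]
    refine le_of_eq_of_le ?_ (hsum2.trans_eq ?_) <;>
    · simp only [Finset.mul_sum, ← Finset.sum_sub_distrib, ← Finset.sum_add_distrib,
        ← Finset.sum_neg_distrib]
      exact Finset.sum_congr rfl fun n _ => by ring
  have hV0 : 0 ≤ V := Finset.sum_nonneg fun n _ => mul_nonneg (hp n) (sq_nonneg _)
  have hexp : ‖wbar - η • gbar - wstar‖ ^ 2 =
      ‖wbar - wstar‖ ^ 2 - 2 * η * I + η ^ 2 * ‖gbar‖ ^ 2 := by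
    have e : wbar - η • gbar - wstar = (wbar - wstar) - η • gbar := by abel
    rw [e, norm_sub_sq_real, real_inner_smul_right, hin, norm_smul, mul_pow, Real.norm_eq_abs,
      sq_abs]
    ring
  rw [hexp]
  have k1 := mul_le_mul_of_nonneg_left hJ1 (sq_nonneg η)
  have k2 := mul_le_mul_of_nonneg_left hJ2 (by positivity : 0 ≤ η * μ)
  -- lower bound on `2 η (A - F*)`
  have k3 : -(2 * η ^ 2 * S * Γ + V) ≤ 2 * η * (A - F wstar) := by
    have : 0 ≤ 2 * η * (1 - η * S) * (F wbar - F wstar) :=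
      mul_nonneg (mul_nonneg (by positivity) (by nlinarith [mul_pos hS hη0])) (by linarith)
    rw [hΓ]
    linarith
  have k4 := mul_le_mul_of_nonneg_left k3 (by nlinarith [mul_pos hS hη0] : 0 ≤ 1 - 2 * S * η)
  have k5 : 0 ≤ 2 * S * η * (2 * η ^ 2 * S * Γ + V) := by positivity
  have k6 : A - T = (A - F wstar) + Γ := by rw [hΓ]; ring
  rw [k6] at hS1
  linarith
end
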